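/- Let E be a Banach space, T > 0, and let K be a Volterra kernel on [0,T] satisfying Condition (A) with exponent α ∈ [0, 1/4). Let ψ: [0,T]² → E be strongly λ-Hölder bi-continuous with λ > α. Then for every ε > 0 there exists δ > 0 such that for every grid partition π of [0,T]² with mesh ‖π‖ < δ, the step approximation ψ^π satisfies ∫_0^T ‖(K*⊗K*)(ψ^π − ψ)(r,r)‖_E dr < ε; i.e., the diagonal restriction of (K*⊗K*)(ψ^π − ψ) converges to 0 in L¹([0,T]; E) as the mesh of the partition tends to 0. -/

import Mathlib

open MeasureTheory Set

noncomputable section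

namespace YS

variable {E : Type*} [NormedAddCommGroup E] [NormedSpace ℝ E]

/-- A Volterra kernel: a measurable `K : ℝ² → ℝ` with `K t s = 0` whenever `s ≥ t`. -/
def IsVolterraKernel (K : ℝ → ℝ → ℝ) : Prop :=
  Measurable (Function.uncurry K) ∧ ∀ t s : ℝ, t ≤ s → K t s = 0

/-- Condition (A) with exponent `α` and constant `C`; here `K' t s` denotes the partial
derivative `∂K(t,s)/∂t`, whose existence is part of the condition. -/
def CondA (T α C : ℝ) (K K' : ℝ → ℝ → ℝ) : Prop :=
  (∀ s t : ℝ, 0 < s → s < t → t ≤ T → |K t s| ≤ C * s ^ (-α) * (t - s) ^ (-α)) ∧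
  ∀ s t : ℝ, 0 < s → s < t → t ≤ T →
    HasDerivAt (fun r => K r s) (K' t s) t ∧ |K' t s| ≤ C * (t - s) ^ (-(α + 1))

/-- The operator `𝒦*`:  `(𝒦*φ)(s) = φ(s)K(T,s) + ∫_s^T [φ(r) − φ(s)] ∂K(r,s)/∂r dr`. -/
def Kstar (T : ℝ) (K K' : ℝ → ℝ → ℝ) (φ : ℝ → E) (s : ℝ) : E :=
  K T s • φ s + ∫ r in s..T, K' r s • (φ r - φ s)

/-- The operator `A^K`. -/
def AK (T : ℝ) (K' : ℝ → ℝ → ℝ) (φ : ℝ → E) (s : ℝ) : E :=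
  ∫ r in s..T, K' r s • (φ r - φ s)

/-- Rectangular increment `f(u₁,u₂;v₁,v₂)`. -/
def rectInc (ψ : ℝ → ℝ → E) (u₁ u₂ v₁ v₂ : ℝ) : E :=
  ψ u₁ v₁ + ψ u₂ v₂ - ψ u₁ v₂ - ψ u₂ v₁

/-- The operator `B^K`. -/
def BK (T : ℝ) (K' : ℝ → ℝ → ℝ) (ψ : ℝ → ℝ → E) (u v : ℝ) : E :=
  ∫ r₂ in v..T, ∫ r₁ in u..T, (K' r₁ u * K' r₂ v) • rectInc ψ u r₁ v r₂

/-- The operator `𝒦* ⊗ 𝒦*`. -/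
def KstarT (T : ℝ) (K K' : ℝ → ℝ → ℝ) (ψ : ℝ → ℝ → E) (u v : ℝ) : E :=
  (K T u * K T v) • ψ u v + K T v • AK T K' (fun x => ψ x v) u +
    K T u • AK T K' (fun y => ψ u y) v + BK T K' ψ u v

/-- A partition `0 = s₀ < s₁ < ⋯ < s_n = T` of `[0,T]`. -/
structure Partition (T : ℝ) where
  n : ℕ
  pts : ℕ → ℝ
  n_pos : 0 < n
  first : pts 0 = 0
  last : pts n = T
  lt : ∀ i < n, pts i < pts (i + 1)

/-- Mesh of a partition: the largest increment. -/
def Partition.mesh {T : ℝ} (P : Partition T) : ℝ :=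
  (Finset.range P.n).sup' (Finset.nonempty_range_iff.mpr P.n_pos.ne')
    fun i => P.pts (i + 1) - P.pts i

/-- One-dimensional step approximation `φ^π`. -/
def step1 {T : ℝ} (P : Partition T) (φ : ℝ → E) (s : ℝ) : E :=
  ∑ i ∈ Finset.range P.n,
    (Set.Ico (P.pts i) (P.pts (i + 1))).indicator (fun _ => φ (P.pts i)) s

/-- Two-dimensional step approximation `ψ^π` for the grid partition `P × Q`. -/
def step2 {T : ℝ} (P Q : Partition T) (ψ : ℝ → ℝ → E) (u v : ℝ) : E :=
  ∑ i ∈ Finset.range P.n, ∑ j ∈ Finset.range Q.n,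
    ((Set.Ico (P.pts i) (P.pts (i + 1))) ×ˢ (Set.Ico (Q.pts j) (Q.pts (j + 1)))).indicator
      (fun _ => ψ (P.pts i) (Q.pts j)) (u, v)

/-- `λ`-Hölder continuity on `[0,T]` with constant `C`. -/
def IsHolderWith (T lam C : ℝ) (φ : ℝ → E) : Prop :=
  ∀ t₁ ∈ Icc (0:ℝ) T, ∀ t₂ ∈ Icc (0:ℝ) T, ‖φ t₁ - φ t₂‖ ≤ C * |t₁ - t₂| ^ lam

/-- `λ`-Hölder continuity on `[0,T]`. -/
def IsHolder (T lam : ℝ) (φ : ℝ → E) : Prop := ∃ C : ℝ, IsHolderWith T lam C φ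

/-- `λ`-Hölder bi-continuity with constant `C`. -/
def IsHolderBiWith (T lam C : ℝ) (ψ : ℝ → ℝ → E) : Prop :=
  (∀ u₁ ∈ Icc (0:ℝ) T, ∀ u₂ ∈ Icc (0:ℝ) T, ∀ v ∈ Icc (0:ℝ) T,
      ‖ψ u₂ v - ψ u₁ v‖ ≤ C * |u₂ - u₁| ^ lam) ∧
  ∀ u ∈ Icc (0:ℝ) T, ∀ v₁ ∈ Icc (0:ℝ) T, ∀ v₂ ∈ Icc (0:ℝ) T,
      ‖ψ u v₂ - ψ u v₁‖ ≤ C * |v₂ - v₁| ^ lam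

/-- `λ`-Hölder bi-continuity. -/
def IsHolderBi (T lam : ℝ) (ψ : ℝ → ℝ → E) : Prop := ∃ C : ℝ, IsHolderBiWith T lam C ψ

/-- Strong `λ`-Hölder bi-continuity with constant `C`. -/
def IsStrongHolderBiWith (T lam C : ℝ) (ψ : ℝ → ℝ → E) : Prop :=
  IsHolderBiWith T lam C ψ ∧
  ∀ u₁ ∈ Icc (0:ℝ) T, ∀ u₂ ∈ Icc (0:ℝ) T, ∀ v₁ ∈ Icc (0:ℝ) T, ∀ v₂ ∈ Icc (0:ℝ) T,
    ‖rectInc ψ u₁ u₂ v₁ v₂‖ ≤ C * |u₂ - u₁| ^ lam * |v₂ - v₁| ^ lam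

/-- Strong `λ`-Hölder bi-continuity. -/
def IsStrongHolderBi (T lam : ℝ) (ψ : ℝ → ℝ → E) : Prop :=
  ∃ C : ℝ, IsStrongHolderBiWith T lam C ψ

/-- The covariance function `R(s,t) = ∫_0^{s∧t} K(t,r)K(s,r) dr` of the Volterra process. -/
def covR (K : ℝ → ℝ → ℝ) (s t : ℝ) : ℝ := ∫ r in (0:ℝ)..(min s t), K t r * K s r

/-- The 2D Riemann–Stieltjes sum of `f` against `g` over the grid partition `P × Q`. -/
def RSsum {T : ℝ} (P Q : Partition T) (f g : ℝ → ℝ → ℝ) : ℝ :=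
  ∑ i ∈ Finset.range P.n, ∑ j ∈ Finset.range Q.n,
    f (P.pts i) (Q.pts j) *
      rectInc g (P.pts i) (P.pts (i + 1)) (Q.pts j) (Q.pts (j + 1))

/-!
Replace every point by the left end of its cell. At `u`, with `ℓ ≤ u < ρ` the ends of its cell, the
left end map expands distances to points on the right by at most `(ρ - ℓ) / (ρ - u)`, so the
increments of `ψ^π - ψ` based at `u` obey a `λ`-Hölder bound carrying a power of this ratio. They
are also `O(‖π‖ ^ λ)`. Interpolating for `α < β < λ` leaves a factor `‖π‖ ^ (λ - β)` and a
`β`-Hölder bound, strong enough against the singularity `(r - u) ^ (-(α + 1))` of the kernel. For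
`β < 1 / 2` the integral over `[0, T]` of the ratio to the power `2 * β` is `T / (1 - 2 * β)` for
every partition.
-/

open Filter Topology

section Integrals

lemma norm_integral_le_of_norm_le_Ioo {E : Type*} [NormedAddCommGroup E] [NormedSpace ℝ E]
    {f : ℝ → E} {g : ℝ → ℝ} {a b : ℝ} (hab : a ≤ b) (h : ∀ t ∈ Ioo a b, ‖f t‖ ≤ g t)
    (hg : IntervalIntegrable g volume a b) : ‖∫ t in a..b, f t‖ ≤ ∫ t in a..b, g t := by
  refine intervalIntegral.norm_integral_le_of_norm_le hab ?_ hg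
  filter_upwards [volume.ae_ne b] with t htb ht
  exact h t ⟨ht.1, ht.2.lt_of_ne htb⟩

lemma intervalIntegrable_sub_rpow {s : ℝ} (hs : -1 < s) (a b : ℝ) :
    IntervalIntegrable (fun r => (r - a) ^ s) volume a b := by
  simpa using (intervalIntegral.intervalIntegrable_rpow' (a := 0) (b := b - a) hs).comp_sub_right a

lemma integral_sub_rpow {s : ℝ} (hs : -1 < s) (a b : ℝ) :
    ∫ r in a..b, (r - a) ^ s = (b - a) ^ (s + 1) / (s + 1) := by
  rw [intervalIntegral.integral_comp_sub_right (fun x => x ^ s) a, integral_rpow (Or.inl hs),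
    sub_self, Real.zero_rpow (by linarith), sub_zero]

lemma intervalIntegrable_rpow_mul_sub_rpow {T a b : ℝ} (hT : 0 < T) (ha : -1 < a) (hb : -1 < b) :
    IntervalIntegrable (fun u => u ^ a * (T - u) ^ b) volume 0 T := by
  have near_zero {a b : ℝ} (ha : -1 < a) :
      IntervalIntegrable (fun u => u ^ a * (T - u) ^ b) volume 0 (T / 2) := by
    refine (intervalIntegral.intervalIntegrable_rpow' ha).mul_continuousOn
      (ContinuousOn.rpow_const (by fun_prop) fun u hu => Or.inl ?_)
    rw [uIcc_of_le (by positivity)] at hu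
    linarith [hu.2]
  have near_T : IntervalIntegrable (fun u => u ^ a * (T - u) ^ b) volume (T / 2) T := by
    simpa [mul_comm, sub_half] using ((near_zero (b := a) hb).comp_sub_left T).symm
  exact (near_zero ha).trans near_T

lemma div_sub_rpow_eqOn {b c d : ℝ} (h : c ≤ d) :
    EqOn (fun u => (d - c) ^ b * (d - u) ^ (-b)) (fun u => ((d - c) / (d - u)) ^ b)
      (uIoo c d) := by
  intro u hu
  rw [uIoo_of_le h] at hu
  have hud : 0 < d - u := sub_pos.2 hu.2
  beta_reduce
  rw [Real.div_rpow (sub_nonneg.2 h) hud.le, Real.rpow_neg hud.le, div_eq_mul_inv]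

lemma intervalIntegrable_div_sub_rpow {b c d : ℝ} (hb : b < 1) (h : c ≤ d) :
    IntervalIntegrable (fun u => ((d - c) / (d - u)) ^ b) volume c d := by
  have hint : IntervalIntegrable (fun u => (d - u) ^ (-b)) volume c d := by
    simpa using (intervalIntegral.intervalIntegrable_rpow' (a := d - c) (b := 0)
      (r := -b) (by linarith)).comp_sub_left d
  exact (hint.const_mul _).congr_uIoo (div_sub_rpow_eqOn h)

lemma integral_div_sub_rpow {b c d : ℝ} (hb : b < 1) (h : c < d) :
    ∫ u in c..d, ((d - c) / (d - u)) ^ b = (d - c) / (1 - b) := by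
  have hdc : 0 < d - c := sub_pos.2 h
  calc ∫ u in c..d, ((d - c) / (d - u)) ^ b
      = (d - c) ^ b * ∫ u in c..d, (d - u) ^ (-b) := by
        rw [← intervalIntegral.integral_const_mul,
          intervalIntegral.integral_congr_uIoo (div_sub_rpow_eqOn h.le)]
    _ = (d - c) ^ b * ((d - c) ^ (1 - b) / (1 - b)) := by
        rw [intervalIntegral.integral_comp_sub_left (fun x => x ^ (-b)) d,
          integral_rpow (Or.inl (by linarith)), sub_self, neg_add_eq_sub,
          Real.zero_rpow (by linarith), sub_zero]
    _ = (d - c) / (1 - b) := by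
        rw [← mul_div_assoc, ← Real.rpow_add hdc, add_sub_cancel, Real.rpow_one]

end Integrals

section Kernel

variable {T α β C : ℝ} {K K' : ℝ → ℝ → ℝ}

lemma CondA.norm_integral_smul_le (hA : CondA T α C K K') (hαβ : α < β) {u M : ℝ}
    (hu : u ∈ Ioo 0 T) {F : ℝ → E} (hF : ∀ r ∈ Ioo u T, ‖F r‖ ≤ M * (r - u) ^ β) :
    ‖∫ r in u..T, K' r u • F r‖ ≤ M * (C * ((T - u) ^ (β - α) / (β - α))) := by
  have hexp : -1 < β - α - 1 := by linarith
  have bound : ∀ r ∈ Ioo u T, ‖K' r u • F r‖ ≤ M * C * (r - u) ^ (β - α - 1) := by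
    intro r hr
    have hK' : |K' r u| ≤ C * (r - u) ^ (-(α + 1)) := (hA.2 u r hu.1 hr.1 hr.2.le).2
    calc ‖K' r u • F r‖ ≤ C * (r - u) ^ (-(α + 1)) * (M * (r - u) ^ β) := by
          rw [norm_smul, Real.norm_eq_abs]
          exact mul_le_mul hK' (hF r hr) (norm_nonneg _) ((abs_nonneg _).trans hK')
      _ = M * C * ((r - u) ^ (-(α + 1)) * (r - u) ^ β) := by ring
      _ = M * C * (r - u) ^ (β - α - 1) := by
          rw [← Real.rpow_add (sub_pos.2 hr.1)]
          ring_nf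
  calc ‖∫ r in u..T, K' r u • F r‖ ≤ ∫ r in u..T, M * C * (r - u) ^ (β - α - 1) :=
        norm_integral_le_of_norm_le_Ioo hu.2.le bound
          ((intervalIntegrable_sub_rpow hexp u T).const_mul _)
    _ = M * (C * ((T - u) ^ (β - α) / (β - α))) := by
        rw [intervalIntegral.integral_const_mul, integral_sub_rpow hexp, sub_add_cancel, mul_assoc]

lemma BK_eq_iterated_integral (T : ℝ) (K' : ℝ → ℝ → ℝ) (f : ℝ → ℝ → E) (u v : ℝ) :
    BK T K' f u v = ∫ s in v..T, K' s v • ∫ r in u..T, K' r u • rectInc f u r v s := by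
  simp only [BK, ← intervalIntegral.integral_smul, smul_smul, mul_comm]

lemma CondA.norm_kstarT_le (hA : CondA T α C K K') (hαβ : α < β) {f : ℝ → ℝ → E} {u v η a b : ℝ}
    (hu : u ∈ Ioo 0 T) (hv : v ∈ Ioo 0 T) (hf : ‖f u v‖ ≤ η)
    (hfu : ∀ r ∈ Ioo u T, ‖f r v - f u v‖ ≤ η * a * (r - u) ^ β)
    (hfv : ∀ s ∈ Ioo v T, ‖f u s - f u v‖ ≤ η * b * (s - v) ^ β)
    (hfuv : ∀ r ∈ Ioo u T, ∀ s ∈ Ioo v T,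
      ‖rectInc f u r v s‖ ≤ η * a * b * (r - u) ^ β * (s - v) ^ β) :
    ‖KstarT T K K' f u v‖ ≤
      η * (|K T u| + a * (C * ((T - u) ^ (β - α) / (β - α)))) *
        (|K T v| + b * (C * ((T - v) ^ (β - α) / (β - α)))) := by
  set Iu := C * ((T - u) ^ (β - α) / (β - α))
  set Iv := C * ((T - v) ^ (β - α) / (β - α))
  have hAu : ‖AK T K' (fun x => f x v) u‖ ≤ η * a * Iu := hA.norm_integral_smul_le hαβ hu hfu
  have hAv : ‖AK T K' (fun y => f u y) v‖ ≤ η * b * Iv := hA.norm_integral_smul_le hαβ hv hfv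
  have hB : ‖BK T K' f u v‖ ≤ η * a * b * Iu * Iv := by
    rw [BK_eq_iterated_integral]
    refine hA.norm_integral_smul_le hαβ hv fun s hs => ?_
    have inner := hA.norm_integral_smul_le hαβ hu
      (M := η * a * b * (s - v) ^ β) fun r hr => (hfuv r hr s hs).trans_eq (by ring)
    exact inner.trans_eq (by ring)
  calc ‖KstarT T K K' f u v‖
      ≤ ‖(K T u * K T v) • f u v‖ + ‖K T v • AK T K' (fun x => f x v) u‖ +
          ‖K T u • AK T K' (fun y => f u y) v‖ + ‖BK T K' f u v‖ := norm_add₄_le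
    _ ≤ |K T u| * |K T v| * η + |K T v| * (η * a * Iu) + |K T u| * (η * b * Iv) +
          η * a * b * Iu * Iv := by
        simp only [norm_smul, norm_mul, Real.norm_eq_abs]
        gcongr
    _ = η * (|K T u| + a * Iu) * (|K T v| + b * Iv) := by ring

lemma CondA.const_nonneg (hA : CondA T α C K K') (hT : 0 < T) : 0 ≤ C := by
  have h := (abs_nonneg _).trans (hA.2 (T / 2) T (by positivity) (by linarith) le_rfl).2
  exact nonneg_of_mul_nonneg_left h (Real.rpow_pos_of_pos (by linarith) _)

end Kernel

namespace Partition

variable {T : ℝ} (P Q : Partition T) {u r : ℝ}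

lemma monotoneOn_pts : MonotoneOn P.pts (Iic P.n) :=
  (strictMonoOn_Iic_of_lt_succ P.lt).monotoneOn

/-- The index `i` of the cell `[pts i, pts (i + 1))` containing `u`; meaningful for `u ∈ [0, T)`. -/
def idx (u : ℝ) : ℕ := Nat.findGreatest (fun i => P.pts i ≤ u) P.n

/-- The left end of the cell containing `u ∈ [0, T)`. -/
def left (u : ℝ) : ℝ := P.pts (P.idx u)

/-- The right end of the cell containing `u ∈ [0, T)`. -/
def right (u : ℝ) : ℝ := P.pts (P.idx u + 1)

/-- The ratio of the length of the cell containing `u ∈ [0, T)` to the distance from `u` to its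
right end. It bounds the factor by which `P.left` expands the distance from `u` to points on its
right. -/
def stretch (u : ℝ) : ℝ := (P.right u - P.left u) / (P.right u - u)

lemma left_le (hu : 0 ≤ u) : P.left u ≤ u :=
  Nat.findGreatest_spec (P := fun i => P.pts i ≤ u) (Nat.zero_le _) (by rwa [P.first])

lemma idx_lt (hu : u ∈ Ico 0 T) : P.idx u < P.n := by
  refine (Nat.findGreatest_le _).lt_of_ne fun h => ?_
  have : P.pts (P.idx u) ≤ u := P.left_le hu.1
  rw [idx, h, P.last] at this
  exact absurd hu.2 this.not_gt

lemma lt_right (hu : u ∈ Ico 0 T) : u < P.right u :=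
  not_le.1 (Nat.findGreatest_is_greatest (Nat.lt_succ_self _) (P.idx_lt hu))

lemma idx_eq_of_mem {i : ℕ} (hi : i < P.n) (hu : u ∈ Ico (P.pts i) (P.pts (i + 1))) :
    P.idx u = i := by
  refine Nat.findGreatest_eq_iff.2 ⟨hi.le, fun _ => hu.1, fun j hij hj => not_le.2 ?_⟩
  exact hu.2.trans_le (P.monotoneOn_pts (mem_Iic.2 hi) (mem_Iic.2 hj) hij)

lemma left_mem_Icc (hu : u ∈ Ico 0 T) : P.left u ∈ Icc 0 T := by
  refine ⟨?_, (P.left_le hu.1).trans hu.2.le⟩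
  rw [← P.first]
  exact P.monotoneOn_pts (mem_Iic.2 (Nat.zero_le _)) (mem_Iic.2 (P.idx_lt hu).le) (Nat.zero_le _)

lemma abs_left_sub_self_le_mesh (hu : u ∈ Ico 0 T) : |P.left u - u| ≤ P.mesh := by
  have hcell : P.right u - P.left u ≤ P.mesh :=
    Finset.le_sup' (fun i => P.pts (i + 1) - P.pts i) (Finset.mem_range.2 (P.idx_lt hu))
  rw [abs_sub_comm, abs_of_nonneg (sub_nonneg.2 (P.left_le hu.1))]
  linarith [P.lt_right hu]

lemma one_le_stretch (hu : u ∈ Ico 0 T) : 1 ≤ P.stretch u := by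
  rw [stretch, one_le_div (sub_pos.2 (P.lt_right hu))]
  linarith [P.left_le hu.1]

lemma abs_left_sub_left_le (hu : 0 ≤ u) (hur : u < r) (hr : r < T) :
    |P.left r - P.left u| ≤ P.stretch u * (r - u) := by
  have hu' : u ∈ Ico 0 T := ⟨hu, hur.trans hr⟩
  have hr' : r ∈ Ico 0 T := ⟨hu.trans hur.le, hr⟩
  have hidx : P.idx u ≤ P.idx r :=
    Nat.findGreatest_mono (fun _ (h : P.pts _ ≤ u) => h.trans hur.le) le_rfl
  rcases hidx.eq_or_lt with h | h
  · have := zero_le_one.trans (P.one_le_stretch hu')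
    rw [left, left, h, sub_self, abs_zero]
    exact mul_nonneg this (sub_nonneg.2 hur.le)
  · have hn : P.idx r ≤ P.n := (P.idx_lt hr').le
    have hleft : P.left u ≤ P.left r :=
      P.monotoneOn_pts (mem_Iic.2 (hidx.trans hn)) (mem_Iic.2 hn) hidx
    have hright : P.right u ≤ r :=
      (P.monotoneOn_pts (mem_Iic.2 (Nat.succ_le_of_lt (h.trans_le hn))) (mem_Iic.2 hn) h).trans
        (P.left_le hr'.1)
    have hpos : 0 < P.right u - u := sub_pos.2 (P.lt_right hu')
    calc |P.left r - P.left u| ≤ r - P.left u := by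
          rw [abs_of_nonneg (sub_nonneg.2 hleft)]
          linarith [P.left_le hr'.1]
      _ ≤ P.stretch u * (r - u) := by
          rw [stretch, div_mul_eq_mul_div, le_div_iff₀ hpos]
          nlinarith [mul_nonneg (sub_nonneg.2 hright) (sub_nonneg.2 (P.left_le hu))]

lemma stretch_rpow_eqOn (b : ℝ) {i : ℕ} (hi : i < P.n) :
    EqOn (fun u => ((P.pts (i + 1) - P.pts i) / (P.pts (i + 1) - u)) ^ b)
      (fun u => P.stretch u ^ b) (uIoo (P.pts i) (P.pts (i + 1))) := by
  intro u hu
  rw [uIoo_of_le (P.lt i hi).le] at hu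
  simp only [stretch, left, right, P.idx_eq_of_mem hi (Ioo_subset_Ico_self hu)]

lemma intervalIntegrable_stretch_rpow_cell {b : ℝ} (hb : b < 1) {i : ℕ} (hi : i < P.n) :
    IntervalIntegrable (fun u => P.stretch u ^ b) volume (P.pts i) (P.pts (i + 1)) :=
  (intervalIntegrable_div_sub_rpow hb (P.lt i hi).le).congr_uIoo (P.stretch_rpow_eqOn b hi)

lemma intervalIntegrable_stretch_rpow {b : ℝ} (hb : b < 1) :
    IntervalIntegrable (fun u => P.stretch u ^ b) volume 0 T := by
  simpa only [P.first, P.last] using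
    IntervalIntegrable.trans_iterate (a := P.pts) (n := P.n)
      fun _ hi => P.intervalIntegrable_stretch_rpow_cell hb hi

lemma integral_stretch_rpow {b : ℝ} (hb : b < 1) :
    ∫ u in (0 : ℝ)..T, P.stretch u ^ b = T / (1 - b) := by
  calc ∫ u in (0 : ℝ)..T, P.stretch u ^ b
      = ∑ i ∈ Finset.range P.n, ∫ u in P.pts i..P.pts (i + 1), P.stretch u ^ b := by
        rw [intervalIntegral.sum_integral_adjacent_intervals (a := P.pts) (n := P.n)
          fun _ hi => P.intervalIntegrable_stretch_rpow_cell hb hi, P.first, P.last]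
    _ = ∑ i ∈ Finset.range P.n, (P.pts (i + 1) - P.pts i) / (1 - b) := by
        refine Finset.sum_congr rfl fun i hi => ?_
        have hi := Finset.mem_range.1 hi
        rw [← intervalIntegral.integral_congr_uIoo (P.stretch_rpow_eqOn b hi),
          integral_div_sub_rpow hb (P.lt i hi)]
    _ = T / (1 - b) := by
        rw [← Finset.sum_div, Finset.sum_range_sub, P.first, P.last, sub_zero]

end Partition

section StepError

variable {F : Type*} [NormedAddCommGroup F] {T lam β H δ : ℝ} {P Q : Partition T}
  {ψ : ℝ → ℝ → F} {u v r s : ℝ}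

lemma step1_eq (P : Partition T) (φ : ℝ → F) (hu : u ∈ Ico 0 T) : step1 P φ u = φ (P.left u) := by
  rw [step1, Finset.sum_eq_single_of_mem (P.idx u) (Finset.mem_range.2 (P.idx_lt hu))]
  · exact indicator_of_mem (show u ∈ Ico (P.left u) (P.right u) from
      ⟨P.left_le hu.1, P.lt_right hu⟩) _
  · intro i hi hne
    refine indicator_of_notMem (fun h => hne ?_) _
    exact (P.idx_eq_of_mem (Finset.mem_range.1 hi) h).symm

lemma step2_eq_step1_step1 (P Q : Partition T) (ψ : ℝ → ℝ → F) (u v : ℝ) :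
    step2 P Q ψ u v = step1 P (fun x => step1 Q (ψ x) v) u := by
  simp only [step2, step1, indicator_apply, mem_prod, ite_and]
  exact Finset.sum_congr rfl fun i _ => by split_ifs <;> simp

/-- The error `ψ^π - ψ` of the step approximation along the grid `P × Q`. -/
def stepError (P Q : Partition T) (ψ : ℝ → ℝ → F) (u v : ℝ) : F := step2 P Q ψ u v - ψ u v

lemma stepError_eq (P Q : Partition T) (ψ : ℝ → ℝ → F) (hu : u ∈ Ico 0 T) (hv : v ∈ Ico 0 T) :
    stepError P Q ψ u v = ψ (P.left u) (Q.left v) - ψ u v := by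
  rw [stepError, step2_eq_step1_step1, step1_eq P _ hu, step1_eq Q _ hv]

lemma IsHolderBiWith.swap (hψ : IsHolderBiWith T lam H ψ) :
    IsHolderBiWith T lam H (fun x y => ψ y x) :=
  ⟨fun x hx y hy z hz => hψ.2 z hz x hx y hy, fun x hx y hy z hz => hψ.1 y hy z hz x hx⟩

lemma IsHolderBiWith.const_nonneg (hψ : IsHolderBiWith T lam H ψ) (hT : 0 < T) : 0 ≤ H := by
  have h0 : (0 : ℝ) ∈ Icc 0 T := ⟨le_rfl, hT.le⟩
  have h := (norm_nonneg _).trans (hψ.1 0 h0 T ⟨hT.le, le_rfl⟩ 0 h0)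
  exact nonneg_of_mul_nonneg_left h (Real.rpow_pos_of_pos (by simpa using hT.ne') _)

lemma IsHolderBiWith.norm_stepError_le (hψ : IsHolderBiWith T lam H ψ) (hlam : 0 ≤ lam)
    (hP : P.mesh ≤ δ) (hQ : Q.mesh ≤ δ) (hu : u ∈ Ico 0 T) (hv : v ∈ Ico 0 T) :
    ‖stepError P Q ψ u v‖ ≤ 2 * H * δ ^ lam := by
  have hH : 0 ≤ H := hψ.const_nonneg (hu.1.trans_lt hu.2)
  have hQv := Q.left_mem_Icc hv
  calc ‖stepError P Q ψ u v‖
      ≤ ‖ψ (P.left u) (Q.left v) - ψ u (Q.left v)‖ + ‖ψ u (Q.left v) - ψ u v‖ := by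
        rw [stepError_eq P Q ψ hu hv]
        exact norm_sub_le_norm_sub_add_norm_sub _ _ _
    _ ≤ H * |P.left u - u| ^ lam + H * |Q.left v - v| ^ lam :=
        add_le_add (hψ.1 _ (Ico_subset_Icc_self hu) _ (P.left_mem_Icc hu) _ hQv)
          (hψ.2 _ (Ico_subset_Icc_self hu) _ (Ico_subset_Icc_self hv) _ hQv)
    _ ≤ H * δ ^ lam + H * δ ^ lam := by
        gcongr
        · exact (P.abs_left_sub_self_le_mesh hu).trans hP
        · exact (Q.abs_left_sub_self_le_mesh hv).trans hQ
    _ = 2 * H * δ ^ lam := by ring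

lemma Partition.abs_left_sub_left_rpow_le (P : Partition T) (hlam : 0 ≤ lam) (hu : 0 ≤ u)
    (hur : u < r) (hr : r < T) :
    |P.left r - P.left u| ^ lam ≤ (P.stretch u * (r - u)) ^ lam :=
  Real.rpow_le_rpow (abs_nonneg _) (P.abs_left_sub_left_le hu hur hr) hlam

lemma Partition.abs_sub_rpow_le (P : Partition T) (hlam : 0 ≤ lam) (hu : 0 ≤ u)
    (hur : u < r) (hr : r < T) : |r - u| ^ lam ≤ (P.stretch u * (r - u)) ^ lam := by
  rw [abs_of_pos (sub_pos.2 hur)]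
  exact Real.rpow_le_rpow (sub_nonneg.2 hur.le) (le_mul_of_one_le_left (sub_nonneg.2 hur.le)
    (P.one_le_stretch ⟨hu, hur.trans hr⟩)) hlam

lemma IsHolderBiWith.norm_stepError_sub_le (hψ : IsHolderBiWith T lam H ψ) (hlam : 0 ≤ lam)
    (hu : 0 ≤ u) (hur : u < r) (hr : r < T) (hv : v ∈ Ico 0 T) :
    ‖stepError P Q ψ r v - stepError P Q ψ u v‖ ≤ 2 * H * (P.stretch u * (r - u)) ^ lam := by
  have hu' : u ∈ Ico 0 T := ⟨hu, hur.trans hr⟩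
  have hr' : r ∈ Ico 0 T := ⟨hu.trans hur.le, hr⟩
  have hH : 0 ≤ H := hψ.const_nonneg (hv.1.trans_lt hv.2)
  calc ‖stepError P Q ψ r v - stepError P Q ψ u v‖
      = ‖(ψ (P.left r) (Q.left v) - ψ (P.left u) (Q.left v)) - (ψ r v - ψ u v)‖ := by
        rw [stepError_eq P Q ψ hr' hv, stepError_eq P Q ψ hu' hv, sub_sub_sub_comm]
    _ ≤ H * |P.left r - P.left u| ^ lam + H * |r - u| ^ lam :=
        (norm_sub_le _ _).trans <| add_le_add
          (hψ.1 _ (P.left_mem_Icc hu') _ (P.left_mem_Icc hr') _ (Q.left_mem_Icc hv))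
          (hψ.1 _ (Ico_subset_Icc_self hu') _ (Ico_subset_Icc_self hr') _ (Ico_subset_Icc_self hv))
    _ ≤ H * (P.stretch u * (r - u)) ^ lam + H * (P.stretch u * (r - u)) ^ lam := by
        gcongr H * ?_ + H * ?_
        · exact P.abs_left_sub_left_rpow_le hlam hu hur hr
        · exact P.abs_sub_rpow_le hlam hu hur hr
    _ = 2 * H * (P.stretch u * (r - u)) ^ lam := by ring

lemma rectInc_stepError (P Q : Partition T) (ψ : ℝ → ℝ → F) (hu : u ∈ Ico 0 T) (hr : r ∈ Ico 0 T)
    (hv : v ∈ Ico 0 T) (hs : s ∈ Ico 0 T) :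
    rectInc (stepError P Q ψ) u r v s =
      rectInc ψ (P.left u) (P.left r) (Q.left v) (Q.left s) - rectInc ψ u r v s := by
  simp only [rectInc, stepError_eq P Q ψ hu hv, stepError_eq P Q ψ hr hs,
    stepError_eq P Q ψ hu hs, stepError_eq P Q ψ hr hv]
  abel

lemma IsStrongHolderBiWith.norm_rectInc_stepError_le (hψ : IsStrongHolderBiWith T lam H ψ)
    (hlam : 0 ≤ lam) (hu : 0 ≤ u) (hur : u < r) (hr : r < T) (hv : 0 ≤ v) (hvs : v < s)
    (hs : s < T) :
    ‖rectInc (stepError P Q ψ) u r v s‖ ≤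
      2 * H * (P.stretch u * (r - u) * (Q.stretch v * (s - v))) ^ lam := by
  have hu' : u ∈ Ico 0 T := ⟨hu, hur.trans hr⟩
  have hr' : r ∈ Ico 0 T := ⟨hu.trans hur.le, hr⟩
  have hv' : v ∈ Ico 0 T := ⟨hv, hvs.trans hs⟩
  have hs' : s ∈ Ico 0 T := ⟨hv.trans hvs.le, hs⟩
  have hH : 0 ≤ H := hψ.1.const_nonneg (hu'.1.trans_lt hu'.2)
  have hX : 0 ≤ P.stretch u * (r - u) := (abs_nonneg _).trans (P.abs_left_sub_left_le hu hur hr)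
  have hY : 0 ≤ Q.stretch v * (s - v) := (abs_nonneg _).trans (Q.abs_left_sub_left_le hv hvs hs)
  calc ‖rectInc (stepError P Q ψ) u r v s‖
      ≤ H * |P.left r - P.left u| ^ lam * |Q.left s - Q.left v| ^ lam +
          H * |r - u| ^ lam * |s - v| ^ lam := by
        rw [rectInc_stepError P Q ψ hu' hr' hv' hs']
        exact (norm_sub_le _ _).trans <| add_le_add
          (hψ.2 _ (P.left_mem_Icc hu') _ (P.left_mem_Icc hr') _ (Q.left_mem_Icc hv') _
            (Q.left_mem_Icc hs'))
          (hψ.2 _ (Ico_subset_Icc_self hu') _ (Ico_subset_Icc_self hr') _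
            (Ico_subset_Icc_self hv') _ (Ico_subset_Icc_self hs'))
    _ ≤ H * (P.stretch u * (r - u)) ^ lam * (Q.stretch v * (s - v)) ^ lam +
          H * (P.stretch u * (r - u)) ^ lam * (Q.stretch v * (s - v)) ^ lam := by
        gcongr H * ?_ * ?_ + H * ?_ * ?_
        · exact P.abs_left_sub_left_rpow_le hlam hu hur hr
        · exact Q.abs_left_sub_left_rpow_le hlam hv hvs hs
        · exact P.abs_sub_rpow_le hlam hu hur hr
        · exact Q.abs_sub_rpow_le hlam hv hvs hs
    _ = 2 * H * (P.stretch u * (r - u) * (Q.stretch v * (s - v))) ^ lam := by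
        rw [Real.mul_rpow hX hY]
        ring

lemma le_mul_rpow_mul_rpow_of_le {A x y : ℝ} (hA : 0 ≤ A) (hδ : 0 < δ) (hx : 0 < x)
    (hβ : 0 ≤ β) (hβlam : β ≤ lam) (hyδ : y ≤ A * δ ^ lam) (hyx : y ≤ A * x ^ lam) :
    y ≤ A * δ ^ (lam - β) * x ^ β := by
  have hmin : 0 < min δ x := lt_min hδ hx
  calc y ≤ A * min δ x ^ lam := by rcases min_choice δ x with h | h <;> rwa [h]
    _ = A * min δ x ^ (lam - β) * min δ x ^ β := by
        rw [mul_assoc, ← Real.rpow_add hmin, sub_add_cancel]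
    _ ≤ A * δ ^ (lam - β) * x ^ β := by
        gcongr
        · exact min_le_left _ _
        · exact min_le_right _ _

lemma IsHolderBiWith.norm_stepError_sub_le_left (hψ : IsHolderBiWith T lam H ψ) (hβ : 0 ≤ β)
    (hβlam : β ≤ lam) (hδ : 0 < δ) (hP : P.mesh ≤ δ) (hQ : Q.mesh ≤ δ) (hu : 0 ≤ u) (hur : u < r)
    (hr : r < T) (hv : v ∈ Ico 0 T) :
    ‖stepError P Q ψ r v - stepError P Q ψ u v‖ ≤
      8 * H * δ ^ (lam - β) * P.stretch u ^ β * (r - u) ^ β := by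
  have hu' : u ∈ Ico 0 T := ⟨hu, hur.trans hr⟩
  have hH : 0 ≤ H := hψ.const_nonneg (hv.1.trans_lt hv.2)
  have hlam : 0 ≤ lam := hβ.trans hβlam
  have hρ : 0 < P.stretch u := zero_lt_one.trans_le (P.one_le_stretch hu')
  have hru : 0 < r - u := sub_pos.2 hur
  have err (x) (hx : x ∈ Ico 0 T) := hψ.norm_stepError_le hlam hP hQ hx hv
  have small : ‖stepError P Q ψ r v - stepError P Q ψ u v‖ ≤ 8 * H * δ ^ lam := by
    have : 0 ≤ H * δ ^ lam := by positivity
    linarith [norm_sub_le (stepError P Q ψ r v) (stepError P Q ψ u v), err u hu',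
      err r ⟨hu.trans hur.le, hr⟩]
  have holder : ‖stepError P Q ψ r v - stepError P Q ψ u v‖ ≤
      8 * H * (P.stretch u * (r - u)) ^ lam :=
    (hψ.norm_stepError_sub_le hlam hu hur hr hv).trans (by gcongr; norm_num)
  have key := le_mul_rpow_mul_rpow_of_le (by positivity) hδ (mul_pos hρ hru) hβ hβlam small holder
  rwa [Real.mul_rpow hρ.le hru.le, ← mul_assoc] at key

lemma stepError_swap (P Q : Partition T) (ψ : ℝ → ℝ → F) (hu : u ∈ Ico 0 T) (hv : v ∈ Ico 0 T) :
    stepError Q P (fun x y => ψ y x) v u = stepError P Q ψ u v := by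
  rw [stepError_eq Q P _ hv hu, stepError_eq P Q ψ hu hv]

lemma IsHolderBiWith.norm_stepError_sub_le_right (hψ : IsHolderBiWith T lam H ψ) (hβ : 0 ≤ β)
    (hβlam : β ≤ lam) (hδ : 0 < δ) (hP : P.mesh ≤ δ) (hQ : Q.mesh ≤ δ) (hu : u ∈ Ico 0 T)
    (hv : 0 ≤ v) (hvs : v < s) (hs : s < T) :
    ‖stepError P Q ψ u s - stepError P Q ψ u v‖ ≤
      8 * H * δ ^ (lam - β) * Q.stretch v ^ β * (s - v) ^ β := by
  rw [← stepError_swap P Q ψ hu ⟨hv, hvs.trans hs⟩,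
    ← stepError_swap P Q ψ hu ⟨hv.trans hvs.le, hs⟩]
  exact hψ.swap.norm_stepError_sub_le_left hβ hβlam hδ hQ hP hv hvs hs hu

lemma IsStrongHolderBiWith.norm_rectInc_stepError_le_interp (hψ : IsStrongHolderBiWith T lam H ψ)
    (hβ : 0 ≤ β) (hβlam : β ≤ lam) (hδ : 0 < δ) (hP : P.mesh ≤ δ) (hQ : Q.mesh ≤ δ) (hu : 0 ≤ u)
    (hur : u < r) (hr : r < T) (hv : 0 ≤ v) (hvs : v < s) (hs : s < T) :
    ‖rectInc (stepError P Q ψ) u r v s‖ ≤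
      8 * H * δ ^ (lam - β) * P.stretch u ^ β * Q.stretch v ^ β * (r - u) ^ β * (s - v) ^ β := by
  have hu' : u ∈ Ico 0 T := ⟨hu, hur.trans hr⟩
  have hr' : r ∈ Ico 0 T := ⟨hu.trans hur.le, hr⟩
  have hv' : v ∈ Ico 0 T := ⟨hv, hvs.trans hs⟩
  have hs' : s ∈ Ico 0 T := ⟨hv.trans hvs.le, hs⟩
  have hH : 0 ≤ H := hψ.1.const_nonneg (hu'.1.trans_lt hu'.2)
  have hlam : 0 ≤ lam := hβ.trans hβlam
  have hρ : 0 < P.stretch u := zero_lt_one.trans_le (P.one_le_stretch hu')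
  have hσ : 0 < Q.stretch v := zero_lt_one.trans_le (Q.one_le_stretch hv')
  have hru : 0 < r - u := sub_pos.2 hur
  have hsv : 0 < s - v := sub_pos.2 hvs
  have err (x y) (hx : x ∈ Ico 0 T) (hy : y ∈ Ico 0 T) := hψ.1.norm_stepError_le hlam hP hQ hx hy
  have small : ‖rectInc (stepError P Q ψ) u r v s‖ ≤ 8 * H * δ ^ lam := by
    set e := stepError P Q ψ
    have triangle : ‖rectInc e u r v s‖ ≤ ‖e u v‖ + ‖e r s‖ + ‖e u s‖ + ‖e r v‖ := by
      rw [rectInc, sub_eq_add_neg, sub_eq_add_neg, ← norm_neg (e u s), ← norm_neg (e r v)]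
      exact norm_add₄_le
    linarith [err u v hu' hv', err r s hr' hs', err u s hu' hs', err r v hr' hv']
  have holder : ‖rectInc (stepError P Q ψ) u r v s‖ ≤
      8 * H * (P.stretch u * (r - u) * (Q.stretch v * (s - v))) ^ lam :=
    (hψ.norm_rectInc_stepError_le hlam hu hur hr hv hvs hs).trans (by gcongr; norm_num)
  have key := le_mul_rpow_mul_rpow_of_le (by positivity) hδ
    (mul_pos (mul_pos hρ hru) (mul_pos hσ hsv)) hβ hβlam small holder
  rw [Real.mul_rpow (mul_pos hρ hru).le (mul_pos hσ hsv).le, Real.mul_rpow hρ.le hru.le,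
    Real.mul_rpow hσ.le hsv.le] at key
  exact key.trans_eq (by ring)

end StepError

section Majorant

variable {T α β lam C H δ : ℝ} {K K' : ℝ → ℝ → ℝ} {P Q : Partition T} {ψ : ℝ → ℝ → E} {u v : ℝ}

/-- The contribution of one variable to the pointwise bound on `(𝒦* ⊗ 𝒦*)(ψ^π - ψ)`: the bound on
`|K T u|` from Condition (A), plus the integral of the bound on `∂K(r,u)/∂r` against
`(P.stretch u * (r - u)) ^ β`, where `α < β`. -/
def majorant (α β C : ℝ) (P : Partition T) (u : ℝ) : ℝ :=
  C * (u ^ (-α) * (T - u) ^ (-α)) + P.stretch u ^ β * (C * ((T - u) ^ (β - α) / (β - α)))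

lemma norm_kstarT_stepError_le (hA : CondA T α C K K') (hψ : IsStrongHolderBiWith T lam H ψ)
    (hαβ : α < β) (hβ : 0 ≤ β) (hβlam : β ≤ lam) (hδ : δ ∈ Ioc 0 1) (hP : P.mesh ≤ δ)
    (hQ : Q.mesh ≤ δ) (hu : u ∈ Ioo 0 T) (hv : v ∈ Ioo 0 T) :
    ‖KstarT T K K' (stepError P Q ψ) u v‖ ≤
      8 * H * δ ^ (lam - β) * majorant α β C P u * majorant α β C Q v := by
  have hu' : u ∈ Ico 0 T := Ioo_subset_Ico_self hu
  have hv' : v ∈ Ico 0 T := Ioo_subset_Ico_self hv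
  have hT : 0 < T := hu.1.trans hu.2
  have hC : 0 ≤ C := hA.const_nonneg hT
  have hH : 0 ≤ H := hψ.1.const_nonneg hT
  have hδ₀ : 0 < δ := hδ.1
  have hρ : 0 ≤ P.stretch u := zero_le_one.trans (P.one_le_stretch hu')
  have hσ : 0 ≤ Q.stretch v := zero_le_one.trans (Q.one_le_stretch hv')
  have hu₀ : 0 < u := hu.1
  have hTu : 0 < T - u := sub_pos.2 hu.2
  have hTv : 0 < T - v := sub_pos.2 hv.2
  have hval : ‖stepError P Q ψ u v‖ ≤ 8 * H * δ ^ (lam - β) :=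
    calc ‖stepError P Q ψ u v‖ ≤ 2 * H * δ ^ lam :=
          hψ.1.norm_stepError_le (hβ.trans hβlam) hP hQ hu' hv'
      _ ≤ 8 * H * δ ^ (lam - β) := by
          gcongr ?_ * H * ?_
          · norm_num
          · exact Real.rpow_le_rpow_of_exponent_ge hδ₀ hδ.2 (by linarith)
  have hK (w) (hw : w ∈ Ioo 0 T) : |K T w| ≤ C * (w ^ (-α) * (T - w) ^ (-α)) :=
    (hA.1 w T hw.1 hw.2 le_rfl).trans_eq (mul_assoc _ _ _)
  have key := hA.norm_kstarT_le hαβ hu hv hval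
    (fun r hr => hψ.1.norm_stepError_sub_le_left hβ hβlam hδ₀ hP hQ hu.1.le hr.1 hr.2 hv')
    (fun s hs => hψ.1.norm_stepError_sub_le_right hβ hβlam hδ₀ hP hQ hu' hv.1.le hs.1 hs.2)
    (fun r hr s hs => hψ.norm_rectInc_stepError_le_interp hβ hβlam hδ₀ hP hQ
      hu.1.le hr.1 hr.2 hv.1.le hs.1 hs.2)
  refine key.trans ?_
  rw [majorant, majorant]
  gcongr
  · exact hK u hu
  · exact hK v hv

lemma majorant_mul_majorant_le (hαβ : α < β) (hu : u ∈ Ioo 0 T) :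
    majorant α β C P u * majorant α β C Q u ≤
      C ^ 2 * (2 * (u ^ (-2 * α) * (T - u) ^ (-2 * α)) +
        (T ^ (β - α) / (β - α)) ^ 2 * (P.stretch u ^ (2 * β) + Q.stretch u ^ (2 * β))) := by
  have hTu : 0 < T - u := sub_pos.2 hu.2
  have hαβ' : 0 < β - α := sub_pos.2 hαβ
  have rpow_two_mul' {x : ℝ} (hx : 0 ≤ x) (y : ℝ) : x ^ (2 * y) = (x ^ y) ^ 2 := by
    rw [mul_comm, Real.rpow_mul hx, Real.rpow_two]
  have hρ : 0 ≤ P.stretch u := zero_le_one.trans (P.one_le_stretch (Ioo_subset_Ico_self hu))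
  have hσ : 0 ≤ Q.stretch u := zero_le_one.trans (Q.one_le_stretch (Ioo_subset_Ico_self hu))
  rw [rpow_two_mul' hρ, rpow_two_mul' hσ, neg_mul_comm, rpow_two_mul' hu.1.le,
    rpow_two_mul' hTu.le, ← mul_pow, majorant, majorant]
  set k := u ^ (-α) * (T - u) ^ (-α)
  set J := (T - u) ^ (β - α) / (β - α)
  set a := P.stretch u ^ β
  set b := Q.stretch u ^ β
  have hJ₀ : 0 ≤ J := div_nonneg (Real.rpow_nonneg hTu.le _) hαβ'.le
  have hJ : J ≤ T ^ (β - α) / (β - α) := div_le_div_of_nonneg_right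
    (Real.rpow_le_rpow hTu.le (sub_le_self _ hu.1.le) hαβ'.le) hαβ'.le
  have square : (k + a * J) * (k + b * J) ≤ 2 * k ^ 2 + J ^ 2 * (a ^ 2 + b ^ 2) := by
    nlinarith [sq_nonneg (k - a * J), sq_nonneg (k - b * J), sq_nonneg (a * J - b * J)]
  calc (C * k + a * (C * J)) * (C * k + b * (C * J))
      = C ^ 2 * ((k + a * J) * (k + b * J)) := by ring
    _ ≤ C ^ 2 * (2 * k ^ 2 + J ^ 2 * (a ^ 2 + b ^ 2)) := by gcongr
    _ ≤ C ^ 2 * (2 * k ^ 2 + (T ^ (β - α) / (β - α)) ^ 2 * (a ^ 2 + b ^ 2)) := by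
        gcongr C ^ 2 * (2 * k ^ 2 + ?_ * (a ^ 2 + b ^ 2))
        exact pow_le_pow_left₀ hJ₀ hJ 2

lemma exists_integral_norm_kstarT_stepError_le (hT : 0 < T) (hA : CondA T α C K K')
    (hψ : IsStrongHolderBiWith T lam H ψ) (hαβ : α < β) (hβ : 0 ≤ β) (hβlam : β ≤ lam)
    (hβ' : β < 1 / 2) :
    ∃ W, ∀ δ ∈ Ioc (0 : ℝ) 1, ∀ P Q : Partition T, P.mesh ≤ δ → Q.mesh ≤ δ →
      ∫ u in (0 : ℝ)..T, ‖KstarT T K K' (stepError P Q ψ) u u‖ ≤ W * δ ^ (lam - β) := by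
  set B := ∫ u in (0 : ℝ)..T, u ^ (-2 * α) * (T - u) ^ (-2 * α)
  set J := T ^ (β - α) / (β - α)
  refine ⟨8 * H * (C ^ 2 * (2 * B + J ^ 2 * (T / (1 - 2 * β) + T / (1 - 2 * β)))),
    fun δ hδ P Q hP hQ => ?_⟩
  have hη : 0 ≤ 8 * H * δ ^ (lam - β) :=
    mul_nonneg (mul_nonneg (by norm_num) (hψ.1.const_nonneg hT)) (Real.rpow_nonneg hδ.1.le _)
  have hk := (intervalIntegrable_rpow_mul_sub_rpow (a := -2 * α) (b := -2 * α) hT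
    (by linarith) (by linarith)).const_mul 2
  have hPint := P.intervalIntegrable_stretch_rpow (b := 2 * β) (by linarith)
  have hQint := Q.intervalIntegrable_stretch_rpow (b := 2 * β) (by linarith)
  have hPQint := (hPint.add hQint).const_mul (J ^ 2)
  have hint := ((hk.add hPQint).const_mul (C ^ 2)).const_mul (8 * H * δ ^ (lam - β))
  have pointwise : ∀ u ∈ Ioo 0 T, ‖‖KstarT T K K' (stepError P Q ψ) u u‖‖ ≤
      8 * H * δ ^ (lam - β) * (C ^ 2 * (2 * (u ^ (-2 * α) * (T - u) ^ (-2 * α)) +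
        J ^ 2 * (P.stretch u ^ (2 * β) + Q.stretch u ^ (2 * β)))) := by
    intro u hu
    rw [norm_norm]
    refine (norm_kstarT_stepError_le hA hψ hαβ hβ hβlam hδ hP hQ hu hu).trans ?_
    rw [mul_assoc _ (majorant _ _ _ _ _)]
    exact mul_le_mul_of_nonneg_left (majorant_mul_majorant_le hαβ hu) hη
  refine (Real.le_norm_self _).trans
    ((norm_integral_le_of_norm_le_Ioo hT.le pointwise hint).trans_eq ?_)
  rw [intervalIntegral.integral_const_mul, intervalIntegral.integral_const_mul,
    intervalIntegral.integral_add hk hPQint, intervalIntegral.integral_const_mul,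
    intervalIntegral.integral_const_mul, intervalIntegral.integral_add hPint hQint,
    P.integral_stretch_rpow (by linarith), Q.integral_stretch_rpow (by linarith)]
  ring

end Majorant

theorem kstarT_step2_diag_tendsto_L1_general {E : Type*} [NormedAddCommGroup E] [NormedSpace ℝ E]
    [CompleteSpace E] (T α lam : ℝ) (hT : 0 < T) (hα : α < 1 / 2)
    (K K' : ℝ → ℝ → ℝ) (hK : IsVolterraKernel K) (hA : ∃ C : ℝ, CondA T α C K K')
    (ψ : ℝ → ℝ → E) (hlam : 0 < lam) (hψ : IsStrongHolderBi T lam ψ) (hαlam : α < lam) :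
    ∀ ε > 0, ∃ δ > 0, ∀ P Q : Partition T, max P.mesh Q.mesh < δ →
      (∫ r in (0:ℝ)..T,
          ‖KstarT T K K' (fun x y => step2 P Q ψ x y - ψ x y) r r‖) < ε := by
  intro ε hε
  obtain ⟨C, hA⟩ := hA
  obtain ⟨H, hψ⟩ := hψ
  obtain ⟨β, hβ, hβ'⟩ : ∃ β, max α 0 < β ∧ β < min lam (1 / 2) :=
    exists_between (max_lt (lt_min hαlam hα) (lt_min hlam (by norm_num)))
  obtain ⟨hαβ, hβ0⟩ := max_lt_iff.1 hβ
  obtain ⟨hβlam, hβhalf⟩ := lt_min_iff.1 hβ'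
  obtain ⟨W, hW⟩ := exists_integral_norm_kstarT_stepError_le hT hA hψ hαβ hβ0.le hβlam.le hβhalf
  have rate_tendsto : Tendsto (fun δ : ℝ => W * δ ^ (lam - β)) (𝓝[>] 0) (𝓝 0) := by
    have := (Real.continuousAt_rpow_const 0 _ (Or.inr (sub_pos.2 hβlam).le)).tendsto.const_mul W
    rw [Real.zero_rpow (sub_pos.2 hβlam).ne', mul_zero] at this
    exact this.mono_left nhdsWithin_le_nhds
  obtain ⟨δ, hδε, hδ⟩ :=
    ((rate_tendsto.eventually_lt_const hε).and (Ioc_mem_nhdsGT zero_lt_one)).exists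
  exact ⟨δ, hδ.1, fun P Q hPQ => (hW δ hδ P Q ((le_max_left _ _).trans hPQ.le)
    ((le_max_right _ _).trans hPQ.le)).trans_lt hδε⟩

/-- Theorem 4.1(ii): convergence of the diagonal restriction of
`(𝒦*⊗𝒦*)(ψ^π − ψ)` to `0` in `L¹([0,T]; E)` as the mesh tends to `0`. -/
theorem kstarT_step2_diag_tendsto_L1 {E : Type*} [NormedAddCommGroup E] [NormedSpace ℝ E]
    [CompleteSpace E] (T α lam : ℝ) (hT : 0 < T) (hα : 0 ≤ α) (hα' : α < 1 / 4)
    (K K' : ℝ → ℝ → ℝ) (hK : IsVolterraKernel K) (hA : ∃ C : ℝ, CondA T α C K K')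
    (ψ : ℝ → ℝ → E) (hlam : 0 < lam) (hlam' : lam ≤ 1)
    (hψ : IsStrongHolderBi T lam ψ) (hαlam : α < lam) :
    ∀ ε > 0, ∃ δ > 0, ∀ P Q : Partition T, max P.mesh Q.mesh < δ →
      (∫ r in (0:ℝ)..T,
          ‖KstarT T K K' (fun x y => step2 P Q ψ x y - ψ x y) r r‖) < ε :=
  kstarT_step2_diag_tendsto_L1_general T α lam hT (hα'.trans (by norm_num)) K K' hK hA ψ
    hlam hψ hαlam

end YS
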